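/- Let G be a finite connected simple graph with at least two vertices, with twin classes C_1, …, C_k of sizes n_i = |C_i|, representatives c_i ∈ C_i, and reduced graph H. Then the Wiener index of G satisfies W(G) = Σ_{i : G[C_i] complete} C(n_i, 2) + Σ_{i : G[C_i] edgeless} 2·C(n_i, 2) + Σ_{1 ≤ i < j ≤ k} n_i n_j d_H(c_i, c_j), where d_H(c_i, c_j) is the graph distance between c_i and c_j in H. -/

import Mathlib

open SimpleGraph

/-- Two vertices `u` and `v` of a simple graph are *twins* if
`N(u) \ {v} = N(v) \ {u}`, where `N` denotes the open neighborhood. -/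
def IsTwin {V : Type*} (G : SimpleGraph V) (u v : V) : Prop :=
  G.neighborSet u \ {v} = G.neighborSet v \ {u}

/-- The *Wiener index* of `G`: the sum of the graph distances over all unordered pairs
of distinct vertices of `G` (computed as half the sum over ordered pairs). -/
noncomputable def wienerIndex {V : Type*} [Fintype V] (G : SimpleGraph V) : ℕ :=
  (∑ u : V, ∑ v : V, G.dist u v) / 2

/-!
Replacing vertices by twins maps every edge to an edge or to a single vertex, so it does not
increase distances. Applied to two vertices, this shows that the distance between two distinct
vertices depends only on their twin classes; applied to a retraction onto the representatives, it
shows that the reduced graph is an isometric subgraph. Inside a twin class all distances are `1`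
(clique) or `2` (edgeless class: a neighbor of one vertex is a common neighbor of all).
-/

section Twins

variable {V W : Type*} {G : SimpleGraph V} {G' : SimpleGraph W} {u u' v v' w : V}

theorem edist_map_le_edist {f : V → W}
    (hf : ∀ ⦃u v⦄, G.Adj u v → G'.Adj (f u) (f v) ∨ f u = f v) (u v : V) :
    G'.edist (f u) (f v) ≤ G.edist u v := by
  refine le_iInf fun p => ?_
  induction p with
  | nil => simp
  | @cons u w v huw p ih =>
    calc
      G'.edist (f u) (f v) ≤ G'.edist (f u) (f w) + G'.edist (f w) (f v) :=
        SimpleGraph.edist_triangle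
      _ ≤ 1 + p.length := add_le_add (edist_le_one_iff_adj_or_eq.2 (hf huw)) ih
      _ = (Walk.cons huw p).length := by rw [Walk.length_cons, Nat.cast_add_one, add_comm]

theorem isTwin_iff_forall_adj_iff :
    IsTwin G u v ↔ ∀ x, x ≠ u → x ≠ v → (G.Adj u x ↔ G.Adj v x) := by
  simp only [IsTwin, Set.ext_iff, Set.mem_sdiff, mem_neighborSet, Set.mem_singleton_iff]
  refine forall_congr' fun x => ?_
  rcases eq_or_ne x u with rfl | hxu
  · simp
  rcases eq_or_ne x v with rfl | hxv
  · simp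
  · simp [hxu, hxv]

namespace IsTwin

protected theorem refl (G : SimpleGraph V) (u : V) : IsTwin G u u :=
  rfl

protected theorem symm (h : IsTwin G u v) : IsTwin G v u :=
  Eq.symm h

theorem adj_iff (h : IsTwin G u v) (hu : w ≠ u) (hv : w ≠ v) : G.Adj u w ↔ G.Adj v w :=
  isTwin_iff_forall_adj_iff.1 h w hu hv

theorem adj_or_eq_of_adj (h : IsTwin G u u') (huv : G.Adj u v) : G.Adj u' v ∨ u' = v :=
  or_iff_not_imp_right.2 fun hne => (h.adj_iff huv.ne' (Ne.symm hne)).1 huv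

theorem adj_or_eq (hu : IsTwin G u u') (hv : IsTwin G v v') (huv : G.Adj u v) :
    G.Adj u' v' ∨ u' = v' := by
  rcases hu.adj_or_eq_of_adj huv with h | rfl
  · exact (hv.adj_or_eq_of_adj h.symm).imp Adj.symm Eq.symm
  · rcases hv.adj_or_eq_of_adj huv.symm with h | rfl
    · exact hu.adj_or_eq_of_adj h.symm
    · exact .inl huv.symm

protected theorem trans (huv : IsTwin G u v) (hvw : IsTwin G v w) : IsTwin G u w := by
  have hadj : ∀ {a b x}, IsTwin G a v → IsTwin G v b → G.Adj a x → x ≠ b → G.Adj b x := by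
    intro a b x hav hvb hax hxb
    rcases hav.adj_or_eq_of_adj hax with hvx | rfl
    · exact (hvb.adj_or_eq_of_adj hvx).resolve_right hxb.symm
    · exact ((hav.adj_or_eq hvb hax).resolve_right hxb).symm
  exact isTwin_iff_forall_adj_iff.2 fun x hxu hxw =>
    ⟨fun h => hadj huv hvw h hxw, fun h => hadj hvw.symm huv.symm h hxu⟩

theorem edist_le_edist (hu : IsTwin G u u') (hv : IsTwin G v v') (huv : u ≠ v) :
    G.edist u' v' ≤ G.edist u v := by
  classical
  let f : V → V := Function.update (Function.update id v v') u u'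
  have hfu : f u = u' := Function.update_self ..
  have hfv : f v = v' := by simp [f, huv.symm]
  have hf : ∀ x, IsTwin G x (f x) := by
    intro x
    rcases eq_or_ne x u with rfl | hxu
    · rwa [hfu]
    rcases eq_or_ne x v with rfl | hxv
    · rwa [hfv]
    simpa [f, hxu, hxv] using IsTwin.refl G x
  simpa only [hfu, hfv] using edist_map_le_edist (fun x y => (hf x).adj_or_eq (hf y)) u v

theorem dist_eq_dist (hu : IsTwin G u u') (hv : IsTwin G v v') (huv : u ≠ v) (huv' : u' ≠ v') :
    G.dist u v = G.dist u' v' :=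
  congrArg ENat.toNat ((hu.symm.edist_le_edist hv.symm huv').antisymm (hu.edist_le_edist hv huv))

theorem dist_eq_two (h : IsTwin G u v) (hr : G.Reachable u v) (hne : u ≠ v)
    (hadj : ¬ G.Adj u v) : G.dist u v = 2 := by
  obtain ⟨w, huw⟩ : ∃ w, G.Adj u w := by
    obtain ⟨p⟩ := hr
    cases p with
    | nil => exact absurd rfl hne
    | cons huw _ => exact ⟨_, huw⟩
  have hvw : G.Adj v w := (h.adj_iff huw.ne' fun hwv => hadj (hwv ▸ huw)).1 huw
  exact congrArg ENat.toNat (edist_eq_two_iff.2 ⟨hne, hadj, w, huw, hvw⟩)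

end IsTwin

theorem edist_induce_of_forall_exists_isTwin {s : Set V} (hs : ∀ v, ∃ x ∈ s, IsTwin G x v)
    (x y : s) : (G.induce s).edist x y = G.edist x y := by
  refine le_antisymm ?_ (edist_map_le_edist (f := Subtype.val) (fun _ _ h => .inl h) x y)
  have hretract : ∀ v, ∃ z : s, IsTwin G v z ∧ (v ∈ s → z = v) := by
    intro v
    by_cases hv : v ∈ s
    · exact ⟨⟨v, hv⟩, .refl G v, fun _ => rfl⟩
    · obtain ⟨z, hz, hzv⟩ := hs v
      exact ⟨⟨z, hz⟩, hzv.symm, fun h => absurd h hv⟩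
  choose r hr hrs using hretract
  have hfix : ∀ z : s, r z = z := fun z => Subtype.ext (hrs z z.2)
  have hadj : ∀ ⦃u v⦄, G.Adj u v → (G.induce s).Adj (r u) (r v) ∨ r u = r v := fun u v huv =>
    ((hr u).adj_or_eq (hr v) huv).imp_right Subtype.ext
  simpa only [hfix] using edist_map_le_edist hadj x y

theorem dist_eq_dist_induce_of_isTwin {s : Set V} (hs : ∀ v, ∃ x ∈ s, IsTwin G x v) {x y : s}
    (hxu : IsTwin G x u) (hyv : IsTwin G y v) (huv : u ≠ v) (hxy : (x : V) ≠ y) :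
    G.dist u v = (G.induce s).dist x y :=
  (hxu.symm.dist_eq_dist hyv.symm huv hxy).trans
    (congrArg ENat.toNat (edist_induce_of_forall_exists_isTwin hs x y)).symm

theorem isClique_or_forall_not_adj_of_isTwin {s : Set V} (hs : ∀ u ∈ s, ∀ v ∈ s, IsTwin G u v) :
    G.IsClique s ∨ ∀ u ∈ s, ∀ v ∈ s, ¬ G.Adj u v := by
  refine or_iff_not_imp_right.2 fun h u hu v hv huv => ?_
  push Not at h
  obtain ⟨x, hx, y, hy, hxy⟩ := h
  exact ((hs x hx u hu).adj_or_eq (hs y hy v hv) hxy).resolve_right huv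

end Twins

theorem sum_sum_eq_sum_diag_add_sum_offDiag {ι M : Type*} [AddCommMonoid M] (s : Finset ι)
    (f : ι → ι → M) :
    ∑ i ∈ s, ∑ j ∈ s, f i j = ∑ i ∈ s, f i i + ∑ p ∈ s.offDiag, f p.1 p.2 := by
  classical
  rw [← Finset.sum_product', ← Finset.diag_union_offDiag,
    Finset.sum_union (Finset.disjoint_diag_offDiag s), Finset.sum_diag]

theorem sum_sum_eq_sum_diag_add_two_nsmul {ι M : Type*} [LinearOrder ι] [AddCommMonoid M]
    (s : Finset ι) {f : ι → ι → M} (hf : ∀ i j, f i j = f j i) :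
    ∑ i ∈ s, ∑ j ∈ s, f i j =
      ∑ i ∈ s, f i i + 2 • ∑ p ∈ s ×ˢ s with p.1 < p.2, f p.1 p.2 := by
  have hswap : ∑ p ∈ s ×ˢ s with p.2 < p.1, f p.1 p.2 = ∑ p ∈ s ×ˢ s with p.1 < p.2, f p.1 p.2 :=
    Finset.sum_equiv (Equiv.prodComm ι ι) (by simp [and_comm]) fun p _ => hf p.1 p.2
  have hlt : {p ∈ s.offDiag | p.1 < p.2} = {p ∈ s ×ˢ s | p.1 < p.2} := by grind
  have hgt : {p ∈ s.offDiag | ¬ p.1 < p.2} = {p ∈ s ×ˢ s | p.2 < p.1} := by grind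
  rw [sum_sum_eq_sum_diag_add_sum_offDiag,
    ← Finset.sum_filter_add_sum_filter_not s.offDiag (fun p => p.1 < p.2), hlt, hgt, hswap,
    two_nsmul]

section SumDist

variable {V : Type*} {G : SimpleGraph V} {s t : Finset V}

/-- The sum of the distances from the vertices of `s` to those of `t`, over ordered pairs, so that
the Wiener index of `G` is half of `sumDist G univ univ`. -/
noncomputable def sumDist (G : SimpleGraph V) (s t : Finset V) : ℕ :=
  ∑ u ∈ s, ∑ v ∈ t, G.dist u v

theorem sumDist_comm (G : SimpleGraph V) (s t : Finset V) : sumDist G s t = sumDist G t s :=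
  Finset.sum_comm.trans <| Finset.sum_congr rfl fun _ _ => Finset.sum_congr rfl fun _ _ => dist_comm

theorem sumDist_biUnion_self {ι : Type*} [LinearOrder ι] [DecidableEq V] {I : Finset ι}
    {C : ι → Finset V} (hC : (I : Set ι).PairwiseDisjoint C) :
    sumDist G (I.biUnion C) (I.biUnion C) =
      ∑ i ∈ I, sumDist G (C i) (C i) +
        2 * ∑ p ∈ I ×ˢ I with p.1 < p.2, sumDist G (C p.1) (C p.2) := by
  rw [← smul_eq_mul,
    ← sum_sum_eq_sum_diag_add_two_nsmul I fun i j => sumDist_comm G (C i) (C j)]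
  simp only [sumDist, Finset.sum_biUnion hC]
  exact Finset.sum_congr rfl fun i _ => Finset.sum_comm

theorem sumDist_eq_card_mul_card_mul {d : ℕ} (h : ∀ u ∈ s, ∀ v ∈ t, G.dist u v = d) :
    sumDist G s t = s.card * t.card * d := by
  rw [sumDist, ← Finset.sum_product', ← Finset.card_product]
  exact Finset.sum_const_nat fun p hp =>
    h p.1 (Finset.mem_product.1 hp).1 p.2 (Finset.mem_product.1 hp).2

theorem sumDist_self_eq_two_mul {d : ℕ} (h : (s : Set V).Pairwise fun u v => G.dist u v = d) :
    sumDist G s s = 2 * (d * s.card.choose 2) := by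
  classical
  have hcard : s.offDiag.card = 2 * s.card.choose 2 := by
    rw [← Sym2.card_image_offDiag, Sym2.two_mul_card_image_offDiag]
  have hoff : ∑ p ∈ s.offDiag, G.dist p.1 p.2 = s.offDiag.card * d :=
    Finset.sum_const_nat fun p hp => by
      obtain ⟨hp₁, hp₂, hne⟩ := Finset.mem_offDiag.1 hp
      exact h hp₁ hp₂ hne
  rw [sumDist, sum_sum_eq_sum_diag_add_sum_offDiag, hoff, hcard]
  simp only [dist_self, Finset.sum_const_zero]
  ring

theorem sumDist_self_of_isTwin [Decidable (∀ u ∈ s, ∀ v ∈ s, u ≠ v → G.Adj u v)]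
    [Decidable (∀ u ∈ s, ∀ v ∈ s, ¬ G.Adj u v)] (hG : G.Preconnected)
    (hs : ∀ u ∈ s, ∀ v ∈ s, IsTwin G u v) :
    sumDist G s s =
      2 * ((if ∀ u ∈ s, ∀ v ∈ s, u ≠ v → G.Adj u v then s.card.choose 2 else 0) +
        if ∀ u ∈ s, ∀ v ∈ s, ¬ G.Adj u v then 2 * s.card.choose 2 else 0) := by
  have hboth (hclique : ∀ u ∈ s, ∀ v ∈ s, u ≠ v → G.Adj u v)
      (hedgeless : ∀ u ∈ s, ∀ v ∈ s, ¬ G.Adj u v) : s.card.choose 2 = 0 := by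
    refine Nat.choose_eq_zero_of_lt (Nat.lt_succ_of_le (Finset.card_le_one.2 ?_))
    exact fun u hu v hv => by_contra fun huv => hedgeless u hu v hv (hclique u hu v hv huv)
  rcases isClique_or_forall_not_adj_of_isTwin hs with hclique | hedgeless
  · replace hclique : ∀ u ∈ s, ∀ v ∈ s, u ≠ v → G.Adj u v := fun u hu v hv => hclique hu hv
    rw [sumDist_self_eq_two_mul fun u hu v hv huv =>
      dist_eq_one_iff_adj.2 (hclique u hu v hv huv), if_pos hclique]
    split_ifs with hedgeless
    · simp [hboth hclique hedgeless]
    · rw [one_mul, add_zero]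
  · replace hedgeless : ∀ u ∈ s, ∀ v ∈ s, ¬ G.Adj u v := hedgeless
    rw [sumDist_self_eq_two_mul fun u hu v hv huv =>
      (hs u hu v hv).dist_eq_two (hG u v) huv (hedgeless u hu v hv), if_pos hedgeless]
    split_ifs with hclique
    · simp [hboth hclique hedgeless]
    · rw [zero_add]

theorem sum_sumDist_self_of_isTwin {ι : Type*} {C : ι → Finset V}
    [DecidablePred fun i => ∀ u ∈ C i, ∀ v ∈ C i, u ≠ v → G.Adj u v]
    [DecidablePred fun i => ∀ u ∈ C i, ∀ v ∈ C i, ¬ G.Adj u v] {I : Finset ι} (hG : G.Preconnected)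
    (hC : ∀ i ∈ I, ∀ u ∈ C i, ∀ v ∈ C i, IsTwin G u v) :
    ∑ i ∈ I, sumDist G (C i) (C i) =
      2 * (∑ i ∈ I with ∀ u ∈ C i, ∀ v ∈ C i, u ≠ v → G.Adj u v, (C i).card.choose 2 +
        ∑ i ∈ I with ∀ u ∈ C i, ∀ v ∈ C i, ¬ G.Adj u v, 2 * (C i).card.choose 2) := by
  rw [Finset.sum_filter, Finset.sum_filter, ← Finset.sum_add_distrib, Finset.mul_sum]
  exact Finset.sum_congr rfl fun i hi => sumDist_self_of_isTwin hG (hC i hi)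

end SumDist

/-- Let `G` be a finite connected simple graph with at least two
vertices, with twin classes `C 1, …, C k` of sizes `n i = |C i|`, representatives
`c i ∈ C i`, and reduced graph `H`.  Then the Wiener index of `G` satisfies
`W(G) = Σ_{i : G[C i] complete} C(n i, 2) + Σ_{i : G[C i] edgeless} 2·C(n i, 2)
 + Σ_{i < j} n i · n j · d_H(c i, c j)`,
where `d_H(c i, c j)` is the graph distance between `c i` and `c j` in `H`. -/
theorem wienerIndex_eq_of_twinClasses {V : Type*} [Fintype V] [DecidableEq V]
    (G : SimpleGraph V) [DecidableRel G.Adj] (hG : G.Connected)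
    (hV : 2 ≤ Fintype.card V)
    (k : ℕ) (C : Fin k → Finset V) (c : Fin k → V)
    (hC : ∀ i, (C i : Set V) = {v | IsTwin G (c i) v})
    (hcover : ∀ v : V, ∃ i, v ∈ C i)
    (hdisj : ∀ i j, i ≠ j → Disjoint (C i) (C j)) :
    wienerIndex G =
      (∑ i ∈ Finset.univ.filter (fun i => ∀ u ∈ C i, ∀ v ∈ C i, u ≠ v → G.Adj u v),
          (C i).card.choose 2) +
      (∑ i ∈ Finset.univ.filter (fun i => ∀ u ∈ C i, ∀ v ∈ C i, ¬ G.Adj u v),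
          2 * (C i).card.choose 2) +
      ∑ p ∈ Finset.univ.filter (fun p : Fin k × Fin k => p.1 < p.2),
        (C p.1).card * (C p.2).card *
          (G.induce (Set.range c)).dist ⟨c p.1, Set.mem_range_self p.1⟩
            ⟨c p.2, Set.mem_range_self p.2⟩ := by
  have hmem : ∀ i v, v ∈ C i ↔ IsTwin G (c i) v := fun i => Set.ext_iff.1 (hC i)
  have hself : ∀ i, c i ∈ C i := fun i => (hmem i _).2 (.refl G _)
  have hmeet : ∀ v, ∃ x ∈ Set.range c, IsTwin G x v := fun v =>
    (hcover v).elim fun i hi => ⟨c i, Set.mem_range_self i, (hmem i v).1 hi⟩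
  have hunion : Finset.univ.biUnion C = Finset.univ := by simpa [Finset.eq_univ_iff_forall]
  have hwithin : ∀ i, ∀ u ∈ C i, ∀ v ∈ C i, IsTwin G u v := fun i u hu v hv =>
    ((hmem i u).1 hu).symm.trans ((hmem i v).1 hv)
  have hbetween : ∀ i j, i < j → ∀ u ∈ C i, ∀ v ∈ C j, G.dist u v =
      (G.induce (Set.range c)).dist ⟨c i, Set.mem_range_self i⟩ ⟨c j, Set.mem_range_self j⟩ := by
    intro i j hij u hu v hv
    have hne := Finset.disjoint_iff_ne.1 (hdisj i j hij.ne)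
    exact dist_eq_dist_induce_of_isTwin hmeet ((hmem i u).1 hu) ((hmem j v).1 hv)
      (hne u hu v hv) (hne _ (hself i) _ (hself j))
  refine Nat.div_eq_of_eq_mul_right two_pos ?_
  change sumDist G Finset.univ Finset.univ = _
  rw [← hunion, sumDist_biUnion_self fun i _ j _ => hdisj i j, Finset.univ_product_univ,
    sum_sumDist_self_of_isTwin hG.preconnected fun i _ => hwithin i, ← mul_add,
    Finset.sum_congr rfl fun p hp => sumDist_eq_card_mul_card_mul
      (hbetween p.1 p.2 (Finset.mem_filter.1 hp).2)]
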